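/- Let u be the normalized Airy function and let 0 < δ'₁ < δ'₂ < ... be the increasing enumeration of the zeros of h ↦ u'(-h) on (0,∞). Define w(x) := (-u'(0)/2)·∑_{k=1}^∞ (δ'ₖ)^{-2}·e^{-δ'ₖ·x} for x > 0. Then for every λ > 0: ∫₀^∞ e^{-λx}·w(x) dx = (u'(λ) - u'(0)·u(λ))/(λ·u'(λ)). -/

import Mathlib

open Real MeasureTheory Set Filter Topology

noncomputable section

structure IsAiryPair (u v : ℝ → ℝ) : Prop where
  du : ∀ x, HasDerivAt u (v x) x
  dv : ∀ x, HasDerivAt v (2 * x * u x) x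
  pos : ∀ x, 0 ≤ x → 0 < u x
  anti : StrictAntiOn u (Ici 0)
  lim : Tendsto u atTop (𝓝 0)

namespace IsAiryPair


theorem v_mono {u v : ℝ → ℝ} (A : IsAiryPair u v)
    : MonotoneOn v (Ici 0) := by
  apply monotoneOn_of_deriv_nonneg (convex_Ici 0)
  · exact fun x _ => (A.dv x).continuousAt.continuousWithinAt
  · exact fun x _ => (A.dv x).differentiableAt.differentiableWithinAt
  · intro x hx
    simp only [interior_Ici, mem_Ioi] at hx
    rw [(A.dv x).deriv]
    have := A.pos x hx.le
    positivity

theorem mvt_u {u v : ℝ → ℝ} (A : IsAiryPair u v)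
    (a b : ℝ) (h : a < b) : ∃ c ∈ Ioo a b, v c = (u b - u a) / (b - a) :=
  exists_hasDerivAt_eq_slope u v h (fun x _ => (A.du x).continuousAt.continuousWithinAt)
    (fun x _ => A.du x)

theorem mvt_v {u v : ℝ → ℝ} (A : IsAiryPair u v)
    (a b : ℝ) (h : a < b) : ∃ c ∈ Ioo a b, 2 * c * u c = (v b - v a) / (b - a) :=
  exists_hasDerivAt_eq_slope v (fun c => 2 * c * u c) h
    (fun x _ => (A.dv x).continuousAt.continuousWithinAt)
    (fun x _ => A.dv x)

theorem v_nonpos {u v : ℝ → ℝ} (A : IsAiryPair u v)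
    (x : ℝ) (hx : 0 ≤ x) : v x ≤ 0 := by
  obtain ⟨c, hc, h⟩ := A.mvt_u x (x + 1) (by linarith)
  have h1 : v x ≤ v c := A.v_mono hx (hx.trans hc.1.le) hc.1.le
  have h2 : u (x + 1) < u x := A.anti hx (by simp; linarith) (by linarith)
  have : v c = u (x + 1) - u x := by rw [h]; simp
  linarith

theorem v_lim {u v : ℝ → ℝ} (A : IsAiryPair u v)
    : Tendsto v atTop (𝓝 0) := by
  have h1 : Tendsto (fun x => u (x + -1)) atTop (𝓝 0) :=
    A.lim.comp (tendsto_atTop_add_const_right _ (-1) tendsto_id)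
  have h2 : Tendsto (fun x => u x - u (x + -1)) atTop (𝓝 0) := by simpa using A.lim.sub h1
  refine tendsto_of_tendsto_of_tendsto_of_le_of_le' h2 tendsto_const_nhds ?_ ?_
  · filter_upwards [eventually_ge_atTop 1] with x hx
    obtain ⟨c, hc, h⟩ := A.mvt_u (x + -1) x (by linarith)
    have : v c = u x - u (x + -1) := by rw [h]; simp
    rw [← this]
    exact A.v_mono (by simp; linarith [hc.1]) (by simp; linarith) hc.2.le
  · filter_upwards [eventually_ge_atTop 0] with x hx using A.v_nonpos x hx

theorem mul_lim {u v : ℝ → ℝ} (A : IsAiryPair u v)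
    : Tendsto (fun x => x * u x) atTop (𝓝 0) := by
  have h1 : Tendsto (fun x => v (x + -1)) atTop (𝓝 0) :=
    A.v_lim.comp (tendsto_atTop_add_const_right _ (-1) tendsto_id)
  have h2 : Tendsto (fun x => (v x - v (x + -1)) / 2) atTop (𝓝 0) := by
    simpa using (A.v_lim.sub h1).div_const 2
  have h3 : Tendsto (fun x => (x - 1) * u x) atTop (𝓝 0) := by
    refine tendsto_of_tendsto_of_tendsto_of_le_of_le' tendsto_const_nhds h2 ?_ ?_
    · filter_upwards [eventually_ge_atTop 1] with x hx
      exact mul_nonneg (by linarith) (A.pos x (by linarith)).le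
    · filter_upwards [eventually_ge_atTop 1] with x hx
      obtain ⟨c, hc, h⟩ := A.mvt_v (x + -1) x (by linarith)
      have e : 2 * c * u c = v x - v (x + -1) := by rw [h]; simp
      rw [← e]
      have hu : u x < u c := A.anti (by simp; linarith [hc.1]) (by simp; linarith) hc.2
      have := A.pos x (by linarith)
      have : (x - 1) * u x ≤ c * u c := 
        mul_le_mul (by linarith [hc.1]) hu.le this.le (by linarith [hc.1])
      linarith
  have := h3.add A.lim
  simp only [add_zero] at this
  exact this.congr (fun x => by ring)

/-- energy -/
theorem dE {u v : ℝ → ℝ} (A : IsAiryPair u v)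
    (x : ℝ) : HasDerivAt (fun x => v x ^ 2 / 2 - x * u x ^ 2) (-(u x ^ 2)) x := by
  have := (((A.dv x).pow 2).div_const 2).sub ((hasDerivAt_id x).mul ((A.du x).pow 2))
  refine this.congr_deriv ?_
  simp only [id, Pi.pow_apply]
  push_cast
  ring

theorem E_lim {u v : ℝ → ℝ} (A : IsAiryPair u v)
    : Tendsto (fun x => v x ^ 2 / 2 - x * u x ^ 2) atTop (𝓝 0) := by
  have := ((A.v_lim.pow 2).div_const 2).sub (A.mul_lim.mul A.lim)
  simp only [ne_eq, OfNat.ofNat_ne_zero, not_false_eq_true, zero_pow, zero_div, mul_zero,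
    sub_zero] at this
  exact this.congr (fun x => by ring)

theorem E_anti {u v : ℝ → ℝ} (A : IsAiryPair u v)
    : Antitone (fun x => v x ^ 2 / 2 - x * u x ^ 2) := by
  apply antitone_of_hasDerivAt_nonpos A.dE
  intro x
  have := sq_nonneg (u x)
  simpa using this

theorem E_pos {u v : ℝ → ℝ} (A : IsAiryPair u v)
    (x : ℝ) : 0 < v x ^ 2 / 2 - x * u x ^ 2 := by
  by_contra! hneg
  have h0 : ∀ y, 0 ≤ v y ^ 2 / 2 - y * u y ^ 2 := fun y =>
    A.E_anti.le_of_tendsto A.E_lim y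
  -- on [x, ∞) E = 0
  have h1 : ∀ y, x ≤ y → v y ^ 2 / 2 - y * u y ^ 2 = 0 := fun y hy =>
    le_antisymm ((A.E_anti hy).trans hneg) (h0 y)
  set y := max x 0 + 1 with hy
  have hxy : x < y := by rw [hy]; linarith [le_max_left x 0]
  have hy0 : 0 ≤ y := by rw [hy]; linarith [le_max_right x 0]
  have h2 : HasDerivAt (fun x => v x ^ 2 / 2 - x * u x ^ 2) 0 y := by
    apply (hasDerivAt_const y (0:ℝ)).congr_of_eventuallyEq
    filter_upwards [lt_mem_nhds hxy] with z hz using h1 z hz.le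
  have := h2.unique (A.dE y)
  have h3 := A.pos y hy0
  nlinarith

theorem v_neg {u v : ℝ → ℝ} (A : IsAiryPair u v)
    (x : ℝ) (hx : 0 ≤ x) : v x < 0 := by
  have h := A.v_nonpos x hx
  have h1 := A.E_pos x
  rcases h.lt_or_eq with h | h
  · exact h
  · rw [h] at h1
    nlinarith [mul_nonneg hx (sq_nonneg (u x))]

theorem u_cont {u v : ℝ → ℝ} (A : IsAiryPair u v)
    : Continuous u := continuous_iff_continuousAt.2 fun x => (A.du x).continuousAt

theorem memLp {u v : ℝ → ℝ} (A : IsAiryPair u v)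
    (x : ℝ) : MemLp (fun h => u (h + x)) 2 (volume.restrict (Ioi (0:ℝ))) := by
  rw [memLp_two_iff_integrable_sq]
  · have hd : ∀ h ∈ Ici (0:ℝ), HasDerivAt (fun h => v (h + x) ^ 2 / 2 - (h + x) * u (h + x) ^ 2)
        (-(u (h + x) ^ 2)) h := fun h _ => (A.dE (h + x)).comp_add_const h x
    have := integrableOn_Ioi_deriv_of_nonpos' hd
      (fun h _ => by have := sq_nonneg (u (h + x)); linarith)
      (A.E_lim.comp (tendsto_atTop_add_const_right _ x tendsto_id))
    exact Integrable.congr (Integrable.neg this) (ae_of_all _ fun h => by simp)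
  · exact (A.u_cont.comp (by fun_prop)).aestronglyMeasurable

def Psi {u v : ℝ → ℝ} (A : IsAiryPair u v)
    (x : ℝ) : Lp ℝ 2 (volume.restrict (Ioi (0:ℝ))) := (A.memLp x).toLp

theorem inner_Psi {u v : ℝ → ℝ} (A : IsAiryPair u v)
    (x y : ℝ) : inner ℝ (A.Psi x) (A.Psi y) = ∫ h in Ioi (0:ℝ), u (h + x) * u (h + y) := by
  rw [L2.inner_def]
  apply integral_congr_ae
  filter_upwards [(A.memLp x).coeFn_toLp, (A.memLp y).coeFn_toLp] with h h1 h2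
  simp only [Psi]
  rw [h1, h2]
  simp [mul_comm]

theorem inner_self {u v : ℝ → ℝ} (A : IsAiryPair u v)
    (x : ℝ) : inner ℝ (A.Psi x) (A.Psi x) = v x ^ 2 / 2 - x * u x ^ 2 := by
  rw [A.inner_Psi]
  have hd : ∀ h ∈ Ici (0:ℝ), HasDerivAt (fun h => v (h + x) ^ 2 / 2 - (h + x) * u (h + x) ^ 2)
        (-(u (h + x) ^ 2)) h := fun h _ => (A.dE (h + x)).comp_add_const h x
  have := integral_Ioi_of_hasDerivAt_of_nonpos' hd
      (fun h _ => by have := sq_nonneg (u (h + x)); linarith)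
      (A.E_lim.comp (tendsto_atTop_add_const_right _ x tendsto_id))
  rw [integral_neg] at this
  simp only [zero_add, zero_sub, neg_inj] at this
  rw [← this]
  simp only [pow_two]

theorem inner_ne {u v : ℝ → ℝ} (A : IsAiryPair u v)
    (x y : ℝ) (hxy : x ≠ y) :
    inner ℝ (A.Psi x) (A.Psi y) = (u x * v y - v x * u y) / (2 * (x - y)) := by
  rw [A.inner_Psi]
  have hd : ∀ h ∈ Ici (0:ℝ), HasDerivAt (fun h => u (h + x) * v (h + y) - v (h + x) * u (h + y))
        (2 * (y - x) * (u (h + x) * u (h + y))) h := fun h _ => by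
    have := (((A.du (h + x)).comp_add_const h x).mul ((A.dv (h + y)).comp_add_const h y)).sub
      (((A.dv (h + x)).comp_add_const h x).mul ((A.du (h + y)).comp_add_const h y))
    refine this.congr_deriv ?_
    ring
  have hi : IntegrableOn (fun h => 2 * (y - x) * (u (h + x) * u (h + y))) (Ioi 0) :=
    ((A.memLp x).integrable_mul (A.memLp y)).const_mul _
  have s : ∀ z : ℝ, Tendsto (fun h => h + z) atTop atTop := fun z =>
    tendsto_atTop_add_const_right _ z tendsto_id
  have hl : Tendsto (fun h => u (h + x) * v (h + y) - v (h + x) * u (h + y)) atTop (𝓝 0) := by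
    simpa using ((A.lim.comp (s x)).mul (A.v_lim.comp (s y))).sub
      ((A.v_lim.comp (s x)).mul (A.lim.comp (s y)))
  have := integral_Ioi_of_hasDerivAt_of_tendsto' hd hi hl
  rw [integral_const_mul] at this
  simp only [zero_add, zero_sub] at this
  have h2 : x - y ≠ 0 := sub_ne_zero.2 hxy
  field_simp
  linarith

end IsAiryPair

theorem proj_cs {V : Type*} [NormedAddCommGroup V] [InnerProductSpace ℝ V] {e : ℕ → V}
    (he : Orthonormal ℝ e) (s : Finset ℕ) (x y : V) :
    (inner ℝ x y - ∑ k ∈ s, inner ℝ (e k) x * inner ℝ (e k) y) ^ 2 ≤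
    (inner ℝ x x - ∑ k ∈ s, inner ℝ (e k) x * inner ℝ (e k) x) *
    (inner ℝ y y - ∑ k ∈ s, inner ℝ (e k) y * inner ℝ (e k) y) ∧
    0 ≤ (inner ℝ x x - ∑ k ∈ s, inner ℝ (e k) x * inner ℝ (e k) x) := by
  have key : ∀ x y : V, inner ℝ (x - ∑ k ∈ s, inner ℝ (e k) x • e k) (y - ∑ k ∈ s, inner ℝ (e k) y • e k)
      = inner ℝ x y - ∑ k ∈ s, inner ℝ (e k) x * inner ℝ (e k) y := by
    intro x y
    rw [inner_sub_left, inner_sub_right, inner_sub_right, he.inner_sum]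
    simp only [inner_sum, sum_inner, inner_smul_left, inner_smul_right]
    simp only [real_inner_comm, conj_trivial]
    have : ∑ k ∈ s, inner ℝ (e k) y * inner ℝ (e k) x = ∑ k ∈ s, inner ℝ (e k) x * inner ℝ (e k) y :=
      Finset.sum_congr rfl fun k _ => mul_comm _ _
    simp only [real_inner_comm] at this ⊢
    linarith
  refine ⟨?_, ?_⟩
  · rw [← key, ← key, ← key, pow_two]
    exact real_inner_mul_inner_self_le _ _
  · rw [← key]
    exact real_inner_self_nonneg

structure IsZeroSeq (v : ℝ → ℝ) (δ : ℕ → ℝ) : Prop where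
  pos : ∀ k, 0 < δ k
  mono : StrictMono δ
  zero : ∀ k, v (-(δ k)) = 0
  all : ∀ x : ℝ, 0 < x → v (-x) = 0 → ∃ k, δ k = x

/-- quotient of the Airy function by its derivative, with the first poles removed -/
def airyF (u v : ℝ → ℝ) (δ : ℕ → ℝ) (N : ℕ) (x : ℝ) : ℝ :=
  u x / v x + ∑ k ∈ Finset.range N, 1 / (2 * δ k * (x + δ k))

/-- its derivative -/
def airyF' (u v : ℝ → ℝ) (δ : ℕ → ℝ) (N : ℕ) (x : ℝ) : ℝ :=
  1 - 2 * x * u x ^ 2 / v x ^ 2 - ∑ k ∈ Finset.range N, 1 / (2 * δ k * (x + δ k) ^ 2)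

namespace IsAiryPair


theorem u_zero_ne {u v : ℝ → ℝ} (A : IsAiryPair u v) {δ : ℕ → ℝ} (Z : IsZeroSeq v δ)
    (k : ℕ) : u (-(δ k)) ≠ 0 := by
  intro h
  have := A.E_pos (-(δ k))
  rw [h, Z.zero] at this
  simp at this

theorem orthonormal {u v : ℝ → ℝ} (A : IsAiryPair u v) {δ : ℕ → ℝ} (Z : IsZeroSeq v δ)
    : Orthonormal ℝ (fun k => (√(δ k) * u (-(δ k)))⁻¹ • A.Psi (-(δ k))) := by
  rw [orthonormal_iff_ite]
  intro i j
  rw [inner_smul_left, inner_smul_right]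
  have hi := A.u_zero_ne Z i
  have hd := Z.pos i
  split_ifs with h
  · subst h
    rw [A.inner_self, Z.zero]
    have h1 : √(δ i) ^ 2 = δ i := Real.sq_sqrt hd.le
    have h2 : √(δ i) ≠ 0 := (Real.sqrt_pos.2 hd).ne'
    simp only [conj_trivial]
    field_simp
    rw [h1]; ring
  · rw [A.inner_ne _ _ (fun h2 => h (Z.mono.injective (neg_injective h2))), Z.zero, Z.zero]
    simp

theorem inner_e {u v : ℝ → ℝ} (A : IsAiryPair u v) {δ : ℕ → ℝ} (Z : IsZeroSeq v δ)
    (k : ℕ) (x : ℝ) (hx : v x ≠ 0) :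
    inner ℝ ((√(δ k) * u (-(δ k)))⁻¹ • A.Psi (-(δ k))) ((v x)⁻¹ • A.Psi x) =
      - (1 / (2 * √(δ k) * (x + δ k))) := by
  have hne : -(δ k) ≠ x := fun h => hx (h ▸ Z.zero k)
  have hk := A.u_zero_ne Z k
  have h2 : √(δ k) ≠ 0 := (Real.sqrt_pos.2 (Z.pos k)).ne'
  rw [inner_smul_left, inner_smul_right, A.inner_ne _ _ hne, Z.zero]
  have h3 : x + δ k ≠ 0 := fun h => hne (by linarith)
  have h4 : -(δ k) - x ≠ 0 := fun h => hne (by linarith)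
  simp only [conj_trivial]
  field_simp
  ring

theorem inner_e_mul {u v : ℝ → ℝ} (A : IsAiryPair u v) {δ : ℕ → ℝ} (Z : IsZeroSeq v δ)
    (k : ℕ) (x y : ℝ) (hx : v x ≠ 0) (hy : v y ≠ 0) :
    inner ℝ ((√(δ k) * u (-(δ k)))⁻¹ • A.Psi (-(δ k))) ((v x)⁻¹ • A.Psi x) *
    inner ℝ ((√(δ k) * u (-(δ k)))⁻¹ • A.Psi (-(δ k))) ((v y)⁻¹ • A.Psi y) =
      1 / (4 * δ k * (x + δ k) * (y + δ k)) := by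
  rw [A.inner_e Z k x hx, A.inner_e Z k y hy]
  have h1 : √(δ k) ^ 2 = δ k := Real.sq_sqrt (Z.pos k).le
  rw [neg_mul_neg, div_mul_div_comm]
  congr 1
  · ring
  · linear_combination 4 * (x + δ k) * (y + δ k) * h1

theorem x_add_ne {u v : ℝ → ℝ} (_A : IsAiryPair u v) {δ : ℕ → ℝ} (Z : IsZeroSeq v δ)
    (x : ℝ) (hx : v x ≠ 0) (k : ℕ) : x + δ k ≠ 0 := fun h => hx (by
  rw [show x = -(δ k) by linarith]; exact Z.zero k)

theorem half_F' {u v : ℝ → ℝ} (A : IsAiryPair u v) {δ : ℕ → ℝ} (Z : IsZeroSeq v δ)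
    (N : ℕ) (x : ℝ) (hx : v x ≠ 0) :
    inner ℝ ((v x)⁻¹ • A.Psi x) ((v x)⁻¹ • A.Psi x) - ∑ k ∈ Finset.range N,
      inner ℝ ((√(δ k) * u (-(δ k)))⁻¹ • A.Psi (-(δ k))) ((v x)⁻¹ • A.Psi x) *
      inner ℝ ((√(δ k) * u (-(δ k)))⁻¹ • A.Psi (-(δ k))) ((v x)⁻¹ • A.Psi x)
    = airyF' u v δ N x / 2 := by
  simp only [A.inner_e_mul Z _ x x hx hx]
  rw [inner_smul_left, inner_smul_right, A.inner_self, airyF', sub_div, Finset.sum_div]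
  congr 1
  · simp only [conj_trivial]
    field_simp
  · apply Finset.sum_congr rfl
    intro k _
    have := A.x_add_ne Z x hx k
    have := Z.pos k
    field_simp
    ring

theorem half_F {u v : ℝ → ℝ} (A : IsAiryPair u v) {δ : ℕ → ℝ} (Z : IsZeroSeq v δ)
    (N : ℕ) (x y : ℝ) (hx : v x ≠ 0) (hy : v y ≠ 0) (hxy : x ≠ y) :
    inner ℝ ((v x)⁻¹ • A.Psi x) ((v y)⁻¹ • A.Psi y) - ∑ k ∈ Finset.range N,
      inner ℝ ((√(δ k) * u (-(δ k)))⁻¹ • A.Psi (-(δ k))) ((v x)⁻¹ • A.Psi x) *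
      inner ℝ ((√(δ k) * u (-(δ k)))⁻¹ • A.Psi (-(δ k))) ((v y)⁻¹ • A.Psi y)
    = (airyF u v δ N x - airyF u v δ N y) / (2 * (x - y)) := by
  simp only [A.inner_e_mul Z _ x y hx hy]
  have hs : x - y ≠ 0 := sub_ne_zero.2 hxy
  rw [inner_smul_left, inner_smul_right, A.inner_ne x y hxy, airyF, airyF, add_sub_add_comm,
    ← Finset.sum_sub_distrib, add_div, Finset.sum_div, sub_eq_add_neg, ← Finset.sum_neg_distrib]
  congr 1
  · simp only [conj_trivial]
    field_simp
  · apply Finset.sum_congr rfl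
    intro k _
    have := A.x_add_ne Z x hx k
    have := A.x_add_ne Z y hy k
    have := Z.pos k
    field_simp
    ring

theorem F'_nonneg {u v : ℝ → ℝ} (A : IsAiryPair u v) {δ : ℕ → ℝ} (Z : IsZeroSeq v δ)
    (N : ℕ) (x : ℝ) (hx : v x ≠ 0) : 0 ≤ airyF' u v δ N x := by
  have := (proj_cs (A.orthonormal Z) (Finset.range N) ((v x)⁻¹ • A.Psi x) ((v x)⁻¹ • A.Psi x)).2
  rw [A.half_F' Z N x hx] at this
  linarith

theorem two_point {u v : ℝ → ℝ} (A : IsAiryPair u v) {δ : ℕ → ℝ} (Z : IsZeroSeq v δ)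
    (N : ℕ) (x y : ℝ) (hx : v x ≠ 0) (hy : v y ≠ 0) :
    (airyF u v δ N x - airyF u v δ N y) ^ 2 ≤
      (x - y) ^ 2 * (airyF' u v δ N x * airyF' u v δ N y) := by
  by_cases hxy : x = y
  · simp [hxy]
  have := (proj_cs (A.orthonormal Z) (Finset.range N) ((v x)⁻¹ • A.Psi x) ((v y)⁻¹ • A.Psi y)).1
  rw [A.half_F' Z N x hx, A.half_F' Z N y hy, A.half_F Z N x y hx hy hxy] at this
  have hs : 0 < (x - y) ^ 2 := by have := sub_ne_zero.2 hxy; positivity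
  rw [div_pow, div_le_iff₀ (by nlinarith)] at this
  linarith

theorem hasDeriv_F {u v : ℝ → ℝ} (A : IsAiryPair u v) {δ : ℕ → ℝ} (Z : IsZeroSeq v δ)
    (N : ℕ) (x : ℝ) (hx : v x ≠ 0) :
    HasDerivAt (airyF u v δ N) (airyF' u v δ N x) x := by
  have h1 := (A.du x).div (A.dv x) hx
  have h2 : HasDerivAt (fun x => ∑ k ∈ Finset.range N, 1 / (2 * δ k * (x + δ k)))
      (∑ k ∈ Finset.range N, -(1 / (2 * δ k * (x + δ k) ^ 2))) x := by
    apply HasDerivAt.fun_sum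
    intro k _
    have h3 := A.x_add_ne Z x hx k
    have h4 := (Z.pos k).ne'
    have := (hasDerivAt_const x (1:ℝ)).div (((hasDerivAt_id x).add_const (δ k)).const_mul (2 * δ k))
      (mul_ne_zero (by positivity) h3)
    refine this.congr_deriv ?_
    simp only [id]
    field_simp
    ring
  refine (h1.add h2).congr_deriv ?_
  rw [airyF', Finset.sum_neg_distrib, sub_eq_add_neg]
  congr 1
  field_simp
  ring

theorem diff_F' {u v : ℝ → ℝ} (A : IsAiryPair u v) {δ : ℕ → ℝ} (Z : IsZeroSeq v δ)
    (N : ℕ) (x : ℝ) (hx : v x ≠ 0) :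
    DifferentiableAt ℝ (airyF' u v δ N) x := by
  have hu := (A.du x).differentiableAt
  have hv := (A.dv x).differentiableAt
  unfold airyF'
  apply DifferentiableAt.sub
  · apply DifferentiableAt.sub (by fun_prop)
    exact DifferentiableAt.fun_div (by fun_prop) (by fun_prop) (by positivity)
  · apply DifferentiableAt.fun_sum
    intro k _
    have h3 := A.x_add_ne Z x hx k
    have h4 := (Z.pos k).ne'
    exact DifferentiableAt.fun_div (by fun_prop) (by fun_prop) (by positivity)

theorem ev_ne {u v : ℝ → ℝ} (A : IsAiryPair u v) {δ : ℕ → ℝ} (Z : IsZeroSeq v δ)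
    (j : ℕ) : ∀ᶠ x in 𝓝[≠] (-(δ j)), v x ≠ 0 := by
  have h := (A.dv (-(δ j))).eventually_ne (c := 0) (by
    have := A.u_zero_ne Z j
    have := Z.pos j
    have h2 : -(δ j) ≠ 0 := by linarith
    positivity)
  exact h

theorem lim_pole_core {u v : ℝ → ℝ} (A : IsAiryPair u v) {δ : ℕ → ℝ} (Z : IsZeroSeq v δ)
    (j : ℕ) : ∃ L, Tendsto (fun x => u x / v x + 1 / (2 * δ j * (x + δ j)))
    (𝓝[≠] (-(δ j))) (𝓝 L) := by
  set p := -(δ j) with hp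
  have hu := A.u_zero_ne Z j
  have hd := Z.pos j
  rw [← hp] at hu
  have hc : ContinuousAt (fun x => u x + δ j * v x) p :=
    by
    have := (A.du p).continuousAt
    have := (A.dv p).continuousAt
    fun_prop
  have l1 : Tendsto (fun x => (2 * δ j * (x + δ j) * u x + v x) / ((x + δ j) ^ 2)) (𝓝[≠] p)
      (𝓝 (u p + δ j * v p)) := by
    apply HasDerivAt.lhopital_zero_nhdsNE (f' := fun x => 2 * (x + δ j) * (u x + δ j * v x))
      (g' := fun x => 2 * (x + δ j))
    · refine Eventually.of_forall fun x => ?_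
      have := (((((hasDerivAt_id x).add_const (δ j)).const_mul (2 * δ j)).mul (A.du x)).add (A.dv x))
      refine this.congr_deriv ?_
      simp only [id]
      ring
    · refine Eventually.of_forall fun x => ?_
      have := ((hasDerivAt_id x).add_const (δ j)).pow 2
      refine this.congr_deriv ?_
      simp
    · filter_upwards [self_mem_nhdsWithin] with x hx h
      exact hx (by rw [mem_singleton_iff, hp]; linarith)
    · have : ContinuousAt (fun x => 2 * δ j * (x + δ j) * u x + v x) p := by
        have := (A.du p).continuousAt
        have := (A.dv p).continuousAt
        fun_prop
      have := this.tendsto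
      simp only [hp, Z.zero, neg_add_cancel, mul_zero, zero_mul, add_zero] at this
      exact this.mono_left nhdsWithin_le_nhds
    · have : ContinuousAt (fun x => (x + δ j) ^ 2) p := by fun_prop
      have := this.tendsto
      simp only [hp, neg_add_cancel] at this
      simpa using this.mono_left nhdsWithin_le_nhds
    · refine (hc.tendsto.mono_left nhdsWithin_le_nhds).congr' ?_
      filter_upwards [self_mem_nhdsWithin] with x hx
      have : x + δ j ≠ 0 := fun h => hx (by rw [mem_singleton_iff, hp]; linarith)
      field_simp
  have l2 := (hasDerivAt_iff_tendsto_slope.1 (A.dv p)).const_mul (2 * δ j)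
  have hpne : 2 * δ j * (2 * p * u p) ≠ 0 := by
    have : p ≠ 0 := by rw [hp]; linarith
    positivity
  refine ⟨_, (l1.div l2 hpne).congr' ?_⟩
  filter_upwards [self_mem_nhdsWithin, A.ev_ne Z j] with x hx hvx
  have : x + δ j ≠ 0 := fun h => hx (by rw [mem_singleton_iff, hp]; linarith)
  simp only [Pi.div_apply]
  rw [slope_def_field, hp, Z.zero]
  simp only [sub_neg_eq_add, sub_zero]
  field_simp

theorem lim_pole {u v : ℝ → ℝ} (A : IsAiryPair u v) {δ : ℕ → ℝ} (Z : IsZeroSeq v δ)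
    (N j : ℕ) (hj : j < N) : ∃ L, Tendsto (airyF u v δ N) (𝓝[≠] (-(δ j))) (𝓝 L) := by
  obtain ⟨L, hL⟩ := A.lim_pole_core Z j
  have h2 : ContinuousAt (fun x => ∑ k ∈ (Finset.range N).erase j, 1 / (2 * δ k * (x + δ k)))
      (-(δ j)) := by
    apply tendsto_finsetSum
    intro k hk
    have h3 : -(δ j) + δ k ≠ 0 := fun h => (Finset.ne_of_mem_erase hk)
      (Z.mono.injective (by linarith))
    have h4 := (Z.pos k).ne'
    exact ContinuousAt.div (by fun_prop) (by fun_prop) (by positivity)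
  refine ⟨_, (hL.add (h2.tendsto.mono_left nhdsWithin_le_nhds)).congr fun x => ?_⟩
  rw [airyF, ← Finset.add_sum_erase _ _ (Finset.mem_range.2 hj)]
  ring

theorem delta_tendsto {u v : ℝ → ℝ} (A : IsAiryPair u v) {δ : ℕ → ℝ} (Z : IsZeroSeq v δ)
    : Tendsto δ atTop atTop := by
  rcases tendsto_atTop_of_monotone Z.mono.monotone with h | ⟨l, hl⟩
  · exact h
  exfalso
  have hlt : ∀ k, δ k < l := fun k => (Z.mono (Nat.lt_succ_self k)).trans_le
    (Z.mono.monotone.ge_of_tendsto hl _)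
  have hl' : Tendsto (fun k => -(δ k)) atTop (𝓝[≠] (-l)) := by
    rw [tendsto_nhdsWithin_iff]
    exact ⟨hl.neg, Eventually.of_forall fun k h => (hlt k).ne (neg_injective h)⟩
  have h0 : v (-l) = 0 := by
    have := ((A.dv (-l)).continuousAt.tendsto).comp (hl'.mono_right nhdsWithin_le_nhds)
    refine tendsto_nhds_unique this ?_
    refine tendsto_const_nhds.congr fun k => (Z.zero k).symm
  have h1 : 2 * (-l) * u (-l) = 0 := by
    have := (hasDerivAt_iff_tendsto_slope.1 (A.dv (-l))).comp hl'
    refine tendsto_nhds_unique this ?_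
    refine tendsto_const_nhds.congr fun k => ?_
    simp [slope_def_field, Z.zero, h0]
  have h2 := A.E_pos (-l)
  rw [h0] at h2
  have h3 : u (-l) = 0 := by
    have : l ≠ 0 := by linarith [hlt 0, Z.pos 0]
    simpa [this] using h1
  rw [h3] at h2
  simp at h2

end IsAiryPair

theorem glue_mono (S : Finset ℝ) (F F' : ℝ → ℝ) : ∀ a b : ℝ, a ≤ b → ContinuousOn F (Icc a b) →
    (∀ x ∈ Ioo a b, x ∉ S → HasDerivAt F (F' x) x ∧ 0 ≤ F' x) → F a ≤ F b := by
  induction S using Finset.induction_on with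
  | empty =>
    intro a b hab hc hd
    have : MonotoneOn F (Icc a b) := by
      apply monotoneOn_of_deriv_nonneg (convex_Icc a b) hc
      · intro x hx
        rw [interior_Icc] at hx
        exact (hd x hx (by simp)).1.differentiableAt.differentiableWithinAt
      · intro x hx
        rw [interior_Icc] at hx
        obtain ⟨h1, h2⟩ := hd x hx (by simp)
        rwa [h1.deriv]
    exact this (left_mem_Icc.2 hab) (right_mem_Icc.2 hab) hab
  | insert s S hs ih =>
    intro a b hab hc hd
    by_cases hm : s ∈ Ioo a b
    · have h1 : F a ≤ F s := by
        apply ih a s hm.1.le (hc.mono (Icc_subset_Icc_right hm.2.le))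
        intro x hx hxS
        apply hd x ⟨hx.1, hx.2.trans hm.2⟩
        simp only [Finset.mem_insert, not_or]
        exact ⟨hx.2.ne, hxS⟩
      have h2 : F s ≤ F b := by
        apply ih s b hm.2.le (hc.mono (Icc_subset_Icc_left hm.1.le))
        intro x hx hxS
        apply hd x ⟨hm.1.trans hx.1, hx.2⟩
        simp only [Finset.mem_insert, not_or]
        exact ⟨hx.1.ne', hxS⟩
      exact h1.trans h2
    · apply ih a b hab hc
      intro x hx hxS
      apply hd x hx
      simp only [Finset.mem_insert, not_or]
      exact ⟨fun h => hm (h ▸ hx), hxS⟩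

/-- The Loewner type argument. -/
theorem loewner_bound (F F' : ℝ → ℝ) (S : Finset ℝ) (x₁ y B : ℝ) (hy : y ∉ S) (hxy : x₁ < y)
    (hB : 0 < B)
    (hc : ∀ x, x₁ ≤ x → ContinuousAt F x)
    (hd : ∀ x, x₁ ≤ x → x ∉ S → HasDerivAt F (F' x) x)
    (hd0 : ∀ x, x₁ ≤ x → x ∉ S → 0 ≤ F' x)
    (hd2 : DifferentiableAt ℝ F' y)
    (htwo : ∀ x, x₁ ≤ x → x ∉ S → (F x - F y) ^ 2 ≤ (x - y) ^ 2 * (F' x * F' y))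
    (ε : ℝ → ℝ) (hε : Tendsto ε atTop (𝓝 0)) (hFB : ∀ x, y < x → F x - F y ≤ B + ε x) :
    F' y * (y - x₁) ≤ B := by
  set b := F' y with hb
  rcases (hd0 y hxy.le hy).eq_or_lt with h0 | hbpos
  · rw [← hb] at h0
    rw [← h0]; simp [hB.le]
  rw [← hb] at hbpos
  have mono : ∀ a c, x₁ ≤ a → a ≤ c → F a ≤ F c := fun a c ha hac =>
    glue_mono S F F' a c hac (fun x hx => (hc x (ha.trans hx.1)).continuousWithinAt)
      (fun x hx hxS => ⟨hd x (ha.trans hx.1.le) hxS, hd0 x (ha.trans hx.1.le) hxS⟩)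
  have hdy := hd y hxy.le hy
  rw [← hb] at hdy
  have hslope := hasDerivAt_iff_tendsto_slope.1 hdy
  have hslope_pos : ∀ᶠ x in 𝓝[≠] y, 0 < slope F y x := hslope.eventually (lt_mem_nhds hbpos)
  have hgt : ∀ x, y < x → 0 < F x - F y := by
    intro x hx
    have h1 : ∀ᶠ z in 𝓝[>] y, 0 < slope F y z :=
      hslope_pos.filter_mono (nhdsWithin_mono _ (fun z hz => ne_of_gt hz))
    obtain ⟨z, ⟨hz1, hz2⟩, hz3⟩ := (h1.and (Ioo_mem_nhdsGT hx)).exists.imp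
      (fun z h => (⟨⟨h.2.1, h.1⟩, h.2.2⟩ : (y < z ∧ 0 < slope F y z) ∧ z < x))
    rw [slope_def_field] at hz2
    have := (div_pos_iff_of_pos_right (sub_pos.2 hz1)).1 hz2
    have := mono z x (hxy.le.trans hz1.le) hz3.le
    linarith
  have hlt : ∀ x, x₁ ≤ x → x < y → F x - F y < 0 := by
    intro x hx1 hx
    have h1 : ∀ᶠ z in 𝓝[<] y, 0 < slope F y z :=
      hslope_pos.filter_mono (nhdsWithin_mono _ (fun z hz => ne_of_lt hz))
    obtain ⟨z, ⟨hz1, hz2⟩, hz3⟩ := (h1.and (Ioo_mem_nhdsLT hx)).exists.imp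
      (fun z h => (⟨⟨h.2.2, h.1⟩, h.2.1⟩ : (z < y ∧ 0 < slope F y z) ∧ x < z))
    rw [slope_def_field, div_pos_iff] at hz2
    have := mono x z hx1 hz3.le
    rcases hz2 with h | h <;> linarith
  have hne : ∀ x, x₁ ≤ x → x ≠ y → F x - F y ≠ 0 := by
    intro x hx1 hx
    rcases hx.lt_or_gt with h | h
    · exact (hlt x hx1 h).ne
    · exact (hgt x h).ne'
  set m : ℝ → ℝ := fun x => 1 / (b * (x - y)) - 1 / (F x - F y) with hm
  obtain ⟨L, hL⟩ : ∃ L, Tendsto m (𝓝[≠] y) (𝓝 L) := by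
    have ev : ∀ᶠ x in 𝓝 y, HasDerivAt F (F' x) x := by
      have : ∀ᶠ x in 𝓝 y, x ∉ S := S.finite_toSet.isClosed.isOpen_compl.mem_nhds (by simpa using hy)
      filter_upwards [this, lt_mem_nhds hxy] with x h1 h2 using hd x h2.le h1
    have l1 : Tendsto (fun x => (F x - F y - b * (x - y)) / (x - y) ^ 2) (𝓝[≠] y)
        (𝓝 (deriv F' y / 2)) := by
      apply HasDerivAt.lhopital_zero_nhdsNE (f' := fun x => F' x - b) (g' := fun x => 2 * (x - y))
      · filter_upwards [ev.filter_mono nhdsWithin_le_nhds] with x hx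
        refine ((hx.sub_const (F y)).sub (((hasDerivAt_id x).sub_const y).const_mul b)).congr_deriv ?_
        simp
      · refine Eventually.of_forall fun x => ?_
        refine (((hasDerivAt_id x).sub_const y).pow 2).congr_deriv ?_
        simp
      · filter_upwards [self_mem_nhdsWithin] with x hx h
        exact hx (by rw [mem_singleton_iff]; linarith)
      · have : ContinuousAt (fun x => F x - F y - b * (x - y)) y := by
          have := hc y hxy.le
          fun_prop
        have := this.tendsto
        simp only [sub_self, mul_zero] at this
        exact this.mono_left nhdsWithin_le_nhds
      · have : ContinuousAt (fun x => (x - y) ^ 2) y := by fun_prop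
        have := this.tendsto
        simp only [sub_self] at this
        simpa using this.mono_left nhdsWithin_le_nhds
      · have := (hasDerivAt_iff_tendsto_slope.1 hd2.hasDerivAt).div_const 2
        refine this.congr' ?_
        filter_upwards [self_mem_nhdsWithin] with x hx
        rw [slope_def_field, div_div, mul_comm (x - y)]
    refine ⟨_, (l1.div (hslope.const_mul b) (by positivity)).congr' ?_⟩
    filter_upwards [self_mem_nhdsWithin, (lt_mem_nhds hxy).filter_mono nhdsWithin_le_nhds] with x hx hx1
    have h1 := hne x hx1.le hx
    have h2 : x - y ≠ 0 := sub_ne_zero.2 hx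
    simp only [Pi.div_apply, hm]
    rw [slope_def_field]
    have h3 := hbpos.ne'
    field_simp
  set M := Function.update m y L with hM
  have hMne : ∀ x, x ≠ y → M x = m x := fun x hx => Function.update_of_ne hx _ _
  have hMev : ∀ x, x ≠ y → M =ᶠ[𝓝 x] m := fun x hx => by
    filter_upwards [isOpen_ne.mem_nhds hx] with z hz using hMne z hz
  have hMc : ∀ x, x₁ ≤ x → ContinuousAt M x := by
    intro x hx
    by_cases hxy' : x = y
    · subst hxy'
      exact continuousAt_update_same.2 hL
    · refine ContinuousAt.congr ?_ (hMev x hxy').symm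
      have h1 := hne x hx hxy'
      have h2 : b * (x - y) ≠ 0 := mul_ne_zero hbpos.ne' (sub_ne_zero.2 hxy')
      have := hc x hx
      have c1 : ContinuousAt (fun x => 1 / (b * (x - y))) x :=
        ContinuousAt.div (by fun_prop) (by fun_prop) h2
      have c2 : ContinuousAt (fun x => 1 / (F x - F y)) x :=
        ContinuousAt.div (by fun_prop) (by fun_prop) h1
      exact c1.sub c2
  have hMmono : ∀ x, y < x → M x₁ ≤ M x := by
    intro x hx
    apply glue_mono (insert y S) M (fun x => - (1 / (b * (x - y) ^ 2)) + F' x / (F x - F y) ^ 2)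
      x₁ x (hxy.le.trans hx.le)
      (fun z hz => (hMc z hz.1).continuousWithinAt)
    intro z hz hzS
    simp only [Finset.mem_insert, not_or] at hzS
    have h1 := hne z hz.1.le hzS.1
    have h4 : z - y ≠ 0 := sub_ne_zero.2 hzS.1
    have h2 : b * (z - y) ≠ 0 := mul_ne_zero hbpos.ne' h4
    have h3 := hbpos.ne'
    constructor
    · refine HasDerivAt.congr_of_eventuallyEq ?_ (hMev z hzS.1)
      refine (((hasDerivAt_const z (1:ℝ)).div (((hasDerivAt_id z).sub_const y).const_mul b) h2).sub
        ((hasDerivAt_const z (1:ℝ)).div ((hd z hz.1.le hzS.2).sub_const (F y)) h1)).congr_deriv ?_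
      simp only [id]
      field_simp
      ring
    · have := htwo z hz.1.le hzS.2
      have p1 : 0 < (F z - F y) ^ 2 := by positivity
      have p2 : 0 < b * (z - y) ^ 2 := by positivity
      have : 1 / (b * (z - y) ^ 2) ≤ F' z / (F z - F y) ^ 2 := by
        rw [div_le_div_iff₀ p2 p1]
        linarith
      linarith
  have hx1 : -(1 / (b * (y - x₁))) ≤ M x₁ := by
    rw [hMne _ hxy.ne]
    have h1 := hlt x₁ le_rfl hxy
    have h2 : 0 ≤ -(1 / (F x₁ - F y)) := by
      have := one_div_neg.2 h1
      linarith
    have h3 : 1 / (b * (x₁ - y)) = -(1 / (b * (y - x₁))) := by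
      rw [← neg_sub y x₁, mul_neg, one_div_neg_eq_neg_one_div]
    simp only [hm]
    linarith
  have hlim : Tendsto (fun x => 1 / (b * (x - y)) - 1 / (B + ε x)) atTop (𝓝 (0 - 1 / (B + 0))) := by
    apply Tendsto.sub
    · apply Tendsto.div_atTop tendsto_const_nhds
      apply Tendsto.const_mul_atTop hbpos
      exact tendsto_atTop_add_const_right _ (-y) tendsto_id
    · exact tendsto_const_nhds.div (tendsto_const_nhds.add hε) (by simpa using hB.ne')
  have hfin : -(1 / (b * (y - x₁))) ≤ 0 - 1 / (B + 0) := by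
    refine ge_of_tendsto hlim ?_
    filter_upwards [eventually_gt_atTop y] with x hx
    refine (hx1.trans (hMmono x hx)).trans ?_
    rw [hMne x hx.ne']
    have := one_div_le_one_div_of_le (hgt x hx) (hFB x hx)
    simp only [hm]
    linarith
  have hpos : 0 < b * (y - x₁) := mul_pos hbpos (sub_pos.2 hxy)
  have : 1 / B ≤ 1 / (b * (y - x₁)) := by simp at hfin ⊢; linarith
  exact (one_div_le_one_div hB hpos).1 this

namespace IsAiryPair


theorem F'_bound {u v : ℝ → ℝ} (A : IsAiryPair u v) {δ : ℕ → ℝ} (Z : IsZeroSeq v δ)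
    (N : ℕ) (y : ℝ) (hy : 0 ≤ y) :
    airyF' u v δ (N + 1) y * (y + δ N) ≤ -(u y / v y) := by
  classical
  set S : Finset ℝ := (Finset.range (N + 1)).image (fun k => -(δ k)) with hS
  have hvS : ∀ x, -(δ N) ≤ x → x ∉ S → v x ≠ 0 := by
    intro x hx hxS hv
    rcases lt_or_ge x 0 with h | h
    · obtain ⟨k, hk⟩ := Z.all (-x) (by linarith) (by simpa using hv)
      apply hxS
      rw [hS, Finset.mem_image]
      refine ⟨k, Finset.mem_range.2 (Nat.lt_succ_of_le (Z.mono.le_iff_le.1 ?_)), ?_⟩ <;> linarith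
    · exact (A.v_neg x h).ne hv
  have hlim : ∀ x, ∃ L, x ∈ S → Tendsto (airyF u v δ (N + 1)) (𝓝[≠] x) (𝓝 L) := by
    intro x
    by_cases hx : x ∈ S
    · obtain ⟨k, hk, rfl⟩ := Finset.mem_image.1 hx
      obtain ⟨L, hL⟩ := A.lim_pole Z (N + 1) k (Finset.mem_range.1 hk)
      exact ⟨L, fun _ => hL⟩
    · exact ⟨0, fun h => absurd h hx⟩
  choose L hL using hlim
  set F : ℝ → ℝ := fun x => if x ∈ S then L x else airyF u v δ (N + 1) x with hF
  have hFn : ∀ x, x ∉ S → F x = airyF u v δ (N + 1) x := fun x hx => by simp [hF, hx]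
  have hFev : ∀ x, x ∉ S → F =ᶠ[𝓝 x] airyF u v δ (N + 1) := by
    intro x hx
    have : ∀ᶠ x in 𝓝 x, x ∉ S := S.finite_toSet.isClosed.isOpen_compl.mem_nhds (by simpa using hx)
    filter_upwards [this] with z hz using hFn z hz
  have hd : ∀ x, -(δ N) ≤ x → x ∉ S → HasDerivAt F (airyF' u v δ (N + 1) x) x := fun x hx hxS =>
    (A.hasDeriv_F Z (N + 1) x (hvS x hx hxS)).congr_of_eventuallyEq (hFev x hxS)
  have hnn : ∀ y, 0 ≤ y → y ∉ S := by
    intro y hy h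
    obtain ⟨k, hk, rfl⟩ := Finset.mem_image.1 h
    linarith [Z.pos k]
  have hyS := hnn y hy
  have hxy : -(δ N) < y := by linarith [Z.pos N]
  have hvy := A.v_neg y hy
  have huy := A.pos y hy
  have hB : 0 < -(u y / v y) := by
    have := div_neg_of_pos_of_neg huy hvy
    linarith
  have main := loewner_bound F (airyF' u v δ (N + 1)) S (-(δ N)) y (-(u y / v y)) hyS hxy hB
    ?_ hd ?_ ?_ ?_ (fun x => ∑ k ∈ Finset.range (N + 1), 1 / (2 * δ k * (x + δ k))) ?_ ?_
  · simpa using main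
  · intro x hx
    by_cases hxS : x ∈ S
    · rw [continuousAt_iff_punctured_nhds]
      have : F x = L x := by simp [hF, hxS]
      rw [this]
      refine (hL x hxS).congr' ?_
      have : ∀ᶠ z in 𝓝[≠] x, z ∉ S := by
        have h2 := ((S.erase x).finite_toSet.isClosed.isOpen_compl.mem_nhds
          (show x ∈ (↑(S.erase x) : Set ℝ)ᶜ by simp))
        filter_upwards [mem_nhdsWithin_of_mem_nhds h2, self_mem_nhdsWithin] with z hz hzx hzS
        exact hz (Finset.mem_coe.2 (Finset.mem_erase.2 ⟨hzx, hzS⟩))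
      filter_upwards [this] with z hz using (hFn z hz).symm
    · exact (hd x hx hxS).continuousAt
  · exact fun x hx hxS => A.F'_nonneg Z _ x (hvS x hx hxS)
  · exact A.diff_F' Z _ y hvy.ne
  · intro x hx hxS
    rw [hFn x hxS, hFn y hyS]
    exact A.two_point Z _ x y (hvS x hx hxS) hvy.ne
  · have : Tendsto (fun x => ∑ k ∈ Finset.range (N + 1), 1 / (2 * δ k * (x + δ k))) atTop
        (𝓝 (∑ k ∈ Finset.range (N + 1), 0)) := by
      apply tendsto_finsetSum
      intro k _
      apply Tendsto.div_atTop tendsto_const_nhds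
      apply Tendsto.const_mul_atTop (by linarith [Z.pos k])
      exact tendsto_atTop_add_const_right _ (δ k) tendsto_id
    simpa using this
  · intro x hx
    have hx0 : 0 ≤ x := hy.trans hx.le
    rw [hFn x (hnn x hx0), hFn y hyS, airyF, airyF]
    have h1 := div_neg_of_pos_of_neg (A.pos x hx0) (A.v_neg x hx0)
    have h2 : 0 ≤ ∑ k ∈ Finset.range (N + 1), 1 / (2 * δ k * (y + δ k)) := by
      apply Finset.sum_nonneg
      intro k _
      have := Z.pos k
      positivity
    linarith

theorem F_mono {u v : ℝ → ℝ} (A : IsAiryPair u v) {δ : ℕ → ℝ} (Z : IsZeroSeq v δ)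
    (N : ℕ) (x : ℝ) (hx : 0 ≤ x) : airyF u v δ N 0 ≤ airyF u v δ N x := by
  apply glue_mono ∅ _ (airyF' u v δ N) 0 x hx
  · exact fun z hz => (A.hasDeriv_F Z N z (A.v_neg z hz.1).ne).continuousAt.continuousWithinAt
  · exact fun z hz _ => ⟨A.hasDeriv_F Z N z (A.v_neg z hz.1.le).ne,
      A.F'_nonneg Z N z (A.v_neg z hz.1.le).ne⟩

theorem hasSum_main {u v : ℝ → ℝ} (A : IsAiryPair u v) {δ : ℕ → ℝ} (Z : IsZeroSeq v δ)
    (l : ℝ) (hl : 0 < l) :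
    HasSum (fun k => l / (2 * δ k ^ 2 * (l + δ k))) (u l / v l - u 0 / v 0) := by
  rw [hasSum_iff_tendsto_nat_of_nonneg (fun k => by have := Z.pos k; positivity)]
  rw [← tendsto_add_atTop_iff_nat 1]
  have e : ∀ N, ∑ k ∈ Finset.range (N + 1), l / (2 * δ k ^ 2 * (l + δ k)) =
      (u l / v l - u 0 / v 0) - (airyF u v δ (N + 1) l - airyF u v δ (N + 1) 0) := by
    intro N
    rw [airyF, airyF, add_sub_add_comm, ← Finset.sum_sub_distrib, sub_add_cancel_left,
      ← Finset.sum_neg_distrib]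
    apply Finset.sum_congr rfl
    intro k _
    have := Z.pos k
    have : l + δ k ≠ 0 := by positivity
    field_simp
    ring
  simp only [e]
  suffices h : Tendsto (fun N => airyF u v δ (N + 1) l - airyF u v δ (N + 1) 0) atTop (𝓝 0) by
    simpa using h.const_sub (u l / v l - u 0 / v 0)
  have hup : Tendsto (fun N => l * -(u 0 / v 0) / δ N) atTop (𝓝 0) :=
    Tendsto.div_atTop tendsto_const_nhds (A.delta_tendsto Z)
  refine tendsto_of_tendsto_of_tendsto_of_le_of_le tendsto_const_nhds hup ?_ ?_
  · intro N
    exact sub_nonneg.2 (A.F_mono Z (N + 1) l hl.le)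
  · intro N
    obtain ⟨c, hc, h⟩ := exists_hasDerivAt_eq_slope (airyF u v δ (N + 1)) (airyF' u v δ (N + 1)) hl
      (fun z hz => (A.hasDeriv_F Z _ z (A.v_neg z hz.1).ne).continuousAt.continuousWithinAt)
      (fun z hz => A.hasDeriv_F Z _ z (A.v_neg z hz.1.le).ne)
    have h1 := A.F'_bound Z N c hc.1.le
    have h2 := A.F_mono Z 0 c hc.1.le
    simp only [airyF, Finset.range_zero, Finset.sum_empty, add_zero] at h2
    have h3 := A.F'_nonneg Z (N + 1) c (A.v_neg c hc.1.le).ne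
    have hp := Z.pos N
    have h4 : airyF u v δ (N + 1) l - airyF u v δ (N + 1) 0 = l * airyF' u v δ (N + 1) c := by
      rw [h, sub_zero, mul_div_cancel₀ _ hl.ne']
    simp only
    rw [h4, le_div_iff₀ hp, mul_assoc]
    apply mul_le_mul_of_nonneg_left _ hl.le
    have := mul_nonneg h3 hc.1.le
    linarith

end IsAiryPair

/-- the Laplace transform of
`w(x) = (-u'(0)/2)·∑ₖ δₖ⁻²·e^{-δₖ x}` is `λ ↦ (u'(λ) - u'(0)·u(λ))/(λ·u'(λ))`.
Here `δ k` stands for `δ'_{k+1}`, the zeros of `h ↦ u'(-h)` on `(0,∞)`. -/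
theorem stmt12
    (u : ℝ → ℝ) (hu_smooth : ContDiff ℝ 2 u)
    (hu_ode : ∀ h : ℝ, deriv (deriv u) h = 2 * h * u h)
    (hu_zero : u 0 = 1)
    (hu'_zero : deriv u 0 = -((6:ℝ) ^ ((1:ℝ)/3) * Real.Gamma (2/3) / Real.Gamma (1/3)))
    (hu_pos : ∀ h : ℝ, 0 ≤ h → 0 < u h)
    (hu_anti : StrictAntiOn u (Ici 0))
    (hu_lim : Tendsto u atTop (𝓝 0))
    (δ : ℕ → ℝ) (hδ_pos : ∀ k, 0 < δ k) (hδ_mono : StrictMono δ)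
    (hδ_zero : ∀ k, deriv u (-(δ k)) = 0)
    (hδ_all : ∀ x : ℝ, 0 < x → deriv u (-x) = 0 → ∃ k, δ k = x)
    (w : ℝ → ℝ)
    (hw : ∀ x : ℝ, 0 < x →
      w x = (-(deriv u 0) / 2) * ∑' k : ℕ, ((δ k) ^ 2)⁻¹ * Real.exp (-(δ k) * x)) :
    ∀ l : ℝ, 0 < l →
      (∫ x in Ioi (0:ℝ), Real.exp (-l * x) * w x) =
        (deriv u l - deriv u 0 * u l) / (l * deriv u l) := by
  intro l hl
  have hud : Differentiable ℝ u := hu_smooth.differentiable (by norm_num)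
  have hvd : Differentiable ℝ (deriv u) := by
    have : ContDiff ℝ (1 + 1) u := by norm_num; exact hu_smooth
    exact (contDiff_succ_iff_deriv.1 this).2.2.differentiable (by norm_num)
  have A : IsAiryPair u (deriv u) :=
    { du := fun x => (hud x).hasDerivAt
      dv := fun x => hu_ode x ▸ (hvd x).hasDerivAt
      pos := hu_pos
      anti := hu_anti
      lim := hu_lim }
  have Z : IsZeroSeq (deriv u) δ := ⟨hδ_pos, hδ_mono, hδ_zero, hδ_all⟩
  have hs := A.hasSum_main Z l hl
  have hvl := A.v_neg l hl.le
  have hv0 := A.v_neg 0 le_rfl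
  set c := deriv u 0 with hc
  -- termwise integrals
  have hterm : ∀ k, ∫ x in Ioi (0:ℝ), (-c / 2) * ((δ k ^ 2)⁻¹ * Real.exp (-(l + δ k) * x)) =
      (-c / l) * (l / (2 * δ k ^ 2 * (l + δ k))) := by
    intro k
    have hk := hδ_pos k
    rw [integral_const_mul, integral_const_mul, integral_exp_mul_Ioi (by linarith)]
    simp only [mul_zero, Real.exp_zero]
    have : l + δ k ≠ 0 := by positivity
    have : -(l + δ k) ≠ 0 := neg_ne_zero.2 this
    field_simp
  have hint : ∀ k, Integrable (fun x => (-c / 2) * ((δ k ^ 2)⁻¹ * Real.exp (-(l + δ k) * x)))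
      (volume.restrict (Ioi (0:ℝ))) := fun k =>
    ((integrableOn_exp_mul_Ioi (by linarith [hδ_pos k]) 0).const_mul _).const_mul _
  have hsum : HasSum (fun k => (-c / l) * (l / (2 * δ k ^ 2 * (l + δ k))))
      ((-c / l) * (u l / deriv u l - u 0 / c)) := hs.mul_left _
  have hnorm : Summable (fun k => ∫ x in Ioi (0:ℝ),
      ‖(-c / 2) * ((δ k ^ 2)⁻¹ * Real.exp (-(l + δ k) * x))‖) := by
    refine hsum.summable.congr fun k => ?_
    rw [← hterm k]
    apply integral_congr_ae
    refine ae_of_all _ fun x => ?_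
    simp only
    rw [Real.norm_of_nonneg]
    have := hδ_pos k
    have : 0 ≤ -c / 2 := by linarith
    positivity
  have hI := hasSum_integral_of_summable_integral_norm hint hnorm
  simp only [hterm] at hI
  have hval := hI.unique hsum
  have hcongr : ∫ x in Ioi (0:ℝ), Real.exp (-l * x) * w x =
      ∫ x in Ioi (0:ℝ), ∑' k, (-c / 2) * ((δ k ^ 2)⁻¹ * Real.exp (-(l + δ k) * x)) := by
    apply setIntegral_congr_fun measurableSet_Ioi
    intro x hx
    simp only
    rw [hw x hx, ← tsum_mul_left, ← tsum_mul_left]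
    congr 1
    ext k
    rw [neg_add, add_mul, Real.exp_add]
    ring
  rw [hcongr, hval, hu_zero]
  have := hvl.ne
  have := hv0.ne
  field_simp
  ring
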